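/- Let ψ be a Cartan–Hadamard model function with ∫₀^∞ Θ(s)^{1/(p−1)} ds = +∞ and such that either (a) there exist γ ∈ [0,1) and ℓ ∈ (0,∞) with lim_{r→∞} r^γ·ψ′(r)/ψ(r) = ℓ, or (b) lim_{r→∞} ψ′(r)/ψ(r) = +∞ and lim_{r→∞} (ψ(r)/ψ′(r))·(d/dr) log(ψ′(r)/ψ(r)) = 0. Let u be a global radial solution. Then there exist no constants C > 0 and β > 0 such that u(r) ≤ C·ψ(r)^{−β} for all r > 0. -/

import Mathlib

open Real Filter MeasureTheory
open scoped ENNReal Topology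

/-- The volume-to-surface ratio `Θ(r) = (∫₀ʳ ψ(s)^{n-1} ds) / ψ(r)^{n-1}`. -/
noncomputable def Theta (n : ℕ) (ψ : ℝ → ℝ) (r : ℝ) : ℝ :=
  (∫ s in (0:ℝ)..r, ψ s ^ (n - 1)) / ψ r ^ (n - 1)

/-- A Cartan–Hadamard model function: smooth, `ψ(0)=0`, `ψ'(0)=1`, convex on `[0,∞)`,
positive on `(0,∞)`. -/
def IsCHModel (ψ : ℝ → ℝ) : Prop :=
  ContDiff ℝ (⊤ : ℕ∞) ψ ∧ ψ 0 = 0 ∧ deriv ψ 0 = 1 ∧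
    (∀ r : ℝ, 0 ≤ r → 0 ≤ deriv (deriv ψ) r) ∧ (∀ r : ℝ, 0 < r → 0 < ψ r)

/-- A radial solution on `[0,T)` (with `T ∈ (0,∞]`) with initial datum `α`:
`u ∈ C¹([0,T))`, `u(0)=α`, `u'(0)=0`, `u>0` on `[0,T)`, and
`(ψ^{n-1} |u'|^{p-2} u')' = -ψ^{n-1} u^q` on `(0,T)`. -/
structure IsRadialSolution (n : ℕ) (p q : ℝ) (ψ : ℝ → ℝ) (T : ℝ≥0∞) (α : ℝ)
    (u : ℝ → ℝ) : Prop where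
  init : u 0 = α
  deriv_init : deriv u 0 = 0
  pos : ∀ r : ℝ, 0 ≤ r → ENNReal.ofReal r < T → 0 < u r
  diff : ∀ r : ℝ, 0 ≤ r → ENNReal.ofReal r < T → DifferentiableAt ℝ u r
  deriv_cont : ContinuousOn (deriv u) {r : ℝ | 0 ≤ r ∧ ENNReal.ofReal r < T}
  eqn : ∀ r : ℝ, 0 < r → ENNReal.ofReal r < T →
    HasDerivAt (fun s => ψ s ^ (n - 1) * |deriv u s| ^ (p - 2) * deriv u s)
      (-(ψ r ^ (n - 1) * u r ^ q)) r

/-- The energy function `F_u(r) = ((p-1)/p)|u'(r)|^p + u(r)^{q+1}/(q+1)`. -/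
noncomputable def energyF (p q : ℝ) (u : ℝ → ℝ) (r : ℝ) : ℝ :=
  (p - 1) / p * |deriv u r| ^ p + u r ^ (q + 1) / (q + 1)

/-- The Pohozaev function
`P_u(r) = (∫₀ʳ ψ^{n-1}) F_u(r) + (ψ(r)^{n-1}/(q+1)) |u'(r)|^{p-2} u'(r) u(r)`. -/
noncomputable def pohozaevP (n : ℕ) (p q : ℝ) (ψ u : ℝ → ℝ) (r : ℝ) : ℝ :=
  (∫ s in (0:ℝ)..r, ψ s ^ (n - 1)) * energyF p q u r +
    ψ r ^ (n - 1) / (q + 1) * (|deriv u r| ^ (p - 2) * deriv u r * u r)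

/-- `K(r) = ((p-1)/p + 1/(q+1)) ψ(r)^{n-1} - (n-1)(ψ'(r)/ψ(r)) ∫₀ʳ ψ^{n-1}`. -/
noncomputable def Kfun (n : ℕ) (p q : ℝ) (ψ : ℝ → ℝ) (r : ℝ) : ℝ :=
  ((p - 1) / p + 1 / (q + 1)) * ψ r ^ (n - 1) -
    ((n : ℝ) - 1) * (deriv ψ r / ψ r) * ∫ s in (0:ℝ)..r, ψ s ^ (n - 1)

/-- Condition (a): `r^γ ψ'(r)/ψ(r) → ℓ ∈ (0,∞)` for some `γ ∈ [0,1)`. -/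
def CondA (ψ : ℝ → ℝ) : Prop :=
  ∃ γ ℓ : ℝ, 0 ≤ γ ∧ γ < 1 ∧ 0 < ℓ ∧
    Tendsto (fun r : ℝ => r ^ γ * deriv ψ r / ψ r) atTop (nhds ℓ)

/-- Condition (b): `ψ'/ψ → +∞` and `(ψ/ψ') (log(ψ'/ψ))' → 0`. -/
def CondB (ψ : ℝ → ℝ) : Prop :=
  Tendsto (fun r : ℝ => deriv ψ r / ψ r) atTop atTop ∧
    Tendsto (fun r : ℝ => ψ r / deriv ψ r *
      deriv (fun s : ℝ => Real.log (deriv ψ s / ψ s)) r) atTop (nhds 0)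

/-!
The Pohozaev function of a radial solution starts at `0` and has derivative `K |u'|^p`. At and
above the critical exponent, `K` is at most a negative multiple of `n ψ' ∫ ψ^{n-1} - ψⁿ`, which is
nonnegative by convexity of `ψ`; so the Pohozaev function is nonincreasing.

Suppose `u` is bounded by a power `ψ^{-β}`. Conditions (a) and (b) make `ψ` grow faster than every
power of `r`, so integrating a power of `ψ` costs at most an arbitrarily small power of `ψ`.
Integrating the equation twice therefore improves the decay rate by any factor below `q / (p - 1)`,
which exceeds `1`, until the flux `ψ^{n-1} |u'|^{p-2} u'` times `u` tends to `0`. That product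
bounds the Pohozaev function from below, which must then vanish identically. Hence `K = 0`, the
volume comparison is an equality, and `ψ r = r`: this is not faster than every power of `r`.
-/

open Asymptotics

section OddPower

/-- The odd power `x ↦ |x|^{p-2} x`, which is the nonlinearity of the `p`-Laplacian. -/
noncomputable def oddPow (p x : ℝ) : ℝ :=
  |x| ^ (p - 2) * x

theorem oddPow_zero_right (p : ℝ) : oddPow p 0 = 0 :=
  mul_zero _

theorem abs_oddPow {p : ℝ} (hp : 1 < p) (x : ℝ) : |oddPow p x| = |x| ^ (p - 1) := by
  rw [oddPow, abs_mul, abs_of_nonneg (rpow_nonneg (abs_nonneg x) _)]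
  rcases (abs_nonneg x).eq_or_lt with hx | hx
  · rw [← hx, mul_zero, zero_rpow (sub_pos.2 hp).ne']
  · rw [← rpow_add_one hx.ne']
    ring_nf

theorem oddPow_mul_self {p : ℝ} (hp : 1 < p) (x : ℝ) : oddPow p x * x = |x| ^ p := by
  rw [oddPow, mul_assoc, ← abs_mul_abs_self x, ← mul_assoc]
  rcases (abs_nonneg x).eq_or_lt with hx | hx
  · rw [← hx, mul_zero, zero_rpow (zero_lt_one.trans hp).ne']
  · rw [← rpow_add_one hx.ne', ← rpow_add_one hx.ne']
    ring_nf

theorem oddPow_oddPow {p p' : ℝ} (h : p.HolderConjugate p') (x : ℝ) :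
    oddPow p' (oddPow p x) = x := by
  rcases eq_or_ne x 0 with rfl | hx
  · simp only [oddPow_zero_right]
  have hexp : (p - 1) * (p' - 2) + (p - 2) = 0 := by linarith [h.sub_one_mul_conj]
  rw [oddPow, abs_oddPow h.lt, ← rpow_mul (abs_nonneg x), oddPow, ← mul_assoc,
    ← rpow_add (abs_pos.2 hx), hexp, rpow_zero, one_mul]

theorem continuous_oddPow {p : ℝ} (hp : 1 < p) : Continuous (oddPow p) := by
  have hderiv : deriv (fun x : ℝ => ‖x‖ ^ p) = fun x => p * oddPow p x := by
    ext x
    rw [oddPow, ← mul_assoc]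
    exact (hasDerivAt_abs_rpow x hp).deriv
  have hcont := (contDiff_norm_rpow (E := ℝ) hp).continuous_deriv le_rfl
  rw [hderiv] at hcont
  exact (continuous_const_smul_iff₀ (zero_lt_one.trans hp).ne').1 hcont

/-- Since conjugate odd powers are inverse to each other, `|v|^p = |φ_p(v)|^{p'}` is
differentiable wherever `φ_p(v)` is, even where `v` itself is not. -/
theorem hasDerivAt_abs_rpow_of_hasDerivAt_oddPow {p p' : ℝ} (h : p.HolderConjugate p')
    {v : ℝ → ℝ} {y' r : ℝ} (hv : HasDerivAt (fun s => oddPow p (v s)) y' r) :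
    HasDerivAt (fun s => |v s| ^ p) (p' * v r * y') r := by
  have heq : (fun s => |v s| ^ p) = fun s => |oddPow p (v s)| ^ p' := by
    ext s
    rw [abs_oddPow h.lt, ← rpow_mul (abs_nonneg _), h.sub_one_mul_conj]
  have hcomp := (hasDerivAt_abs_rpow (oddPow p (v r)) h.symm.lt).comp r hv
  rw [mul_assoc p', ← oddPow, oddPow_oddPow h] at hcomp
  rwa [heq]

end OddPower

section GrowthComparison

variable {E : Type*} [NormedAddCommGroup E] [NormedSpace ℝ E] {f f' : ℝ → E} {g g' : ℝ → ℝ}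

theorem exists_norm_sub_le_of_deriv_isBigO (hf : ∀ᶠ x in atTop, HasDerivAt f (f' x) x)
    (hg : ∀ᶠ x in atTop, HasDerivAt g (g' x) x) (hg' : ∀ᶠ x in atTop, 0 ≤ g' x)
    (h : f' =O[atTop] g') :
    ∃ C a : ℝ, ∀ x y, a ≤ x → x ≤ y → ‖f y - f x‖ ≤ C * (g y - g x) := by
  obtain ⟨C, hC⟩ := h.bound
  obtain ⟨a, ha⟩ := eventually_atTop.1 (hf.and (hg.and (hg'.and hC)))
  refine ⟨C, a, fun x y hx hxy => ?_⟩
  have hder : ∀ z ∈ Set.Icc x y, HasDerivAt f (f' z) z ∧ HasDerivAt g (g' z) z ∧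
      0 ≤ g' z ∧ ‖f' z‖ ≤ C * ‖g' z‖ := fun z hz => ha z (hx.trans hz.1)
  refine image_norm_le_of_norm_deriv_right_le_deriv_boundary'
    (f := fun z => f z - f x) (B := fun z => C * (g z - g x)) (B' := fun z => C * g' z)
    (fun z hz => ((hder z hz).1.sub_const _).continuousAt.continuousWithinAt)
    (fun z hz => ((hder z (Set.Ico_subset_Icc_self hz)).1.sub_const _).hasDerivWithinAt)
    (by simp only [sub_self, norm_zero, mul_zero, le_refl])
    (fun z hz => (((hder z hz).2.1.sub_const _).const_mul C).continuousAt.continuousWithinAt)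
    (fun z hz =>
      (((hder z (Set.Ico_subset_Icc_self hz)).2.1.sub_const _).const_mul C).hasDerivWithinAt)
    (fun z hz => ?_) (Set.right_mem_Icc.2 hxy)
  obtain ⟨-, -, hnonneg, hbound⟩ := hder z (Set.Ico_subset_Icc_self hz)
  rwa [norm_of_nonneg hnonneg] at hbound

theorem isBigO_of_deriv_isBigO_of_tendsto_atTop
    (hf : ∀ᶠ x in atTop, HasDerivAt f (f' x) x) (hg : ∀ᶠ x in atTop, HasDerivAt g (g' x) x)
    (hg' : ∀ᶠ x in atTop, 0 ≤ g' x) (h : f' =O[atTop] g') (hlim : Tendsto g atTop atTop) :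
    f =O[atTop] g := by
  obtain ⟨C, a, hC⟩ := exists_norm_sub_le_of_deriv_isBigO hf hg hg' h
  have hlarge : Tendsto (norm ∘ g) atTop atTop := tendsto_norm_atTop_atTop.comp hlim
  have hsub : (fun x => f x - f a) =O[atTop] fun x => g x - g a :=
    .of_bound |C| ((eventually_ge_atTop a).mono fun x hx => by
      calc ‖f x - f a‖ ≤ C * (g x - g a) := hC a x le_rfl hx
        _ ≤ |C| * ‖g x - g a‖ := (le_abs_self _).trans_eq (abs_mul _ _))
  have hsub' : (fun x => f x - f a) =O[atTop] g :=
    hsub.trans ((isBigO_refl g _).sub (isLittleO_const_left.2 (Or.inr hlarge)).isBigO)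
  simpa only [sub_add_cancel] using
    hsub'.add (isLittleO_const_left (c := f a).2 (Or.inr hlarge)).isBigO

theorem isBigO_of_deriv_isBigO_of_tendsto_zero
    (hf : ∀ᶠ x in atTop, HasDerivAt f (f' x) x) (hg : ∀ᶠ x in atTop, HasDerivAt g (g' x) x)
    (hg' : ∀ᶠ x in atTop, 0 ≤ g' x) (h : f' =O[atTop] g') (hf0 : Tendsto f atTop (𝓝 0))
    (hg0 : Tendsto g atTop (𝓝 0)) : f =O[atTop] g := by
  obtain ⟨C, a, hC⟩ := exists_norm_sub_le_of_deriv_isBigO hf hg hg' h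
  refine .of_bound |C| ((eventually_ge_atTop a).mono fun x hx => ?_)
  have hlimit : ‖0 - f x‖ ≤ C * (0 - g x) :=
    le_of_tendsto_of_tendsto (hf0.sub_const _).norm ((hg0.sub_const _).const_mul C)
      ((eventually_ge_atTop x).mono fun y hy => hC x y hx hy)
  calc ‖f x‖ ≤ C * (0 - g x) := by simpa using hlimit
    _ ≤ |C| * ‖g x‖ := by simpa [abs_mul] using le_abs_self (C * (0 - g x))

end GrowthComparison

section Superpolynomial

/-- Growth faster than every power of the variable. On a model manifold this is what separates
conditions (a) and (b) from the Euclidean case `ψ r = r`. -/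
def IsSuperpolynomial (ψ : ℝ → ℝ) : Prop :=
  ∀ k : ℝ, (fun r : ℝ => r ^ k) =O[atTop] ψ

variable {ψ : ℝ → ℝ}

theorem isSuperpolynomial_of_tendsto_mul_logDeriv (hd : ∀ᶠ r in atTop, DifferentiableAt ℝ ψ r)
    (hpos : ∀ᶠ r in atTop, 0 < ψ r) (hlim : Tendsto (fun r => r * logDeriv ψ r) atTop atTop) :
    IsSuperpolynomial ψ := by
  intro k
  obtain ⟨R₀, hR₀⟩ := eventually_atTop.1 (hd.and (hpos.and (hlim.eventually_ge_atTop k)))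
  obtain ⟨R, hR₀R, hR⟩ : ∃ R, R₀ ≤ R ∧ 0 < R :=
    ⟨max R₀ 1, le_max_left _ _, lt_max_of_lt_right one_pos⟩
  have hder : ∀ r ∈ Set.Ici R, HasDerivAt (fun s => ψ s * s ^ (-k))
      (ψ r * r ^ (-k - 1) * (r * logDeriv ψ r - k)) r := by
    intro r hr
    have hr0 : 0 < r := hR.trans_le hr
    obtain ⟨hdiff, hψr, -⟩ := hR₀ r (hR₀R.trans hr)
    refine (hdiff.hasDerivAt.mul (hasDerivAt_rpow_const (Or.inl hr0.ne'))).congr_deriv ?_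
    rw [logDeriv_apply, rpow_sub_one hr0.ne']
    field_simp
    ring
  have hmono : MonotoneOn (fun s => ψ s * s ^ (-k)) (Set.Ici R) := by
    refine monotoneOn_of_hasDerivWithinAt_nonneg (convex_Ici R)
      (fun r hr => (hder r hr).continuousAt.continuousWithinAt)
      (fun r hr => (hder r (interior_subset hr)).hasDerivWithinAt) fun r hr => ?_
    obtain ⟨-, hψr, hk⟩ := hR₀ r (hR₀R.trans (interior_subset hr))
    have hr0 : 0 < r := hR.trans_le (interior_subset hr)
    have := sub_nonneg.2 hk
    positivity
  have hc : 0 < ψ R * R ^ (-k) := mul_pos (hR₀ R hR₀R).2.1 (rpow_pos_of_pos hR _)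
  refine .of_bound (ψ R * R ^ (-k))⁻¹ ((eventually_ge_atTop R).mono fun r hr => ?_)
  have hr0 : 0 < r := hR.trans_le hr
  have hψr : 0 < ψ r := (hR₀ r (hR₀R.trans hr)).2.1
  have hle : ψ R * R ^ (-k) ≤ ψ r * r ^ (-k) := hmono Set.self_mem_Ici hr hr
  rw [norm_of_nonneg (rpow_nonneg hr0.le k), norm_of_nonneg hψr.le, ← div_eq_inv_mul,
    le_div_iff₀' hc]
  rwa [rpow_neg hr0.le, ← div_eq_mul_inv, le_div_iff₀ (rpow_pos_of_pos hr0 k)] at hle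

theorem IsSuperpolynomial.isBigO_rpow (h : IsSuperpolynomial ψ) (hpos : ∀ᶠ r in atTop, 0 ≤ ψ r)
    {δ : ℝ} (hδ : 0 < δ) : (fun r => r) =O[atTop] fun r => ψ r ^ δ := by
  refine ((h δ⁻¹).rpow hδ.le hpos).congr' ?_ .rfl
  filter_upwards [eventually_ge_atTop 0] with r hr
  rw [← rpow_mul hr, inv_mul_cancel₀ hδ.ne', rpow_one]

theorem IsSuperpolynomial.not_eventuallyEq_id (h : IsSuperpolynomial ψ) :
    ¬ψ =ᶠ[atTop] fun r => r := by
  intro heq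
  have hsq : (fun r : ℝ => r ^ 2) =O[atTop] fun r => r :=
    ((h 2).congr_left fun r => rpow_two r).congr' .rfl heq
  have hlittle : (fun r : ℝ => r) =o[atTop] fun r => r ^ 2 := by
    simpa only [pow_one] using isLittleO_pow_pow_atTop_of_lt (𝕜 := ℝ) one_lt_two
  exact isLittleO_irrefl ((eventually_ne_atTop 0).frequently) (hlittle.trans_isBigO hsq)

theorem CondA.tendsto_mul_logDeriv (h : CondA ψ) :
    Tendsto (fun r => r * logDeriv ψ r) atTop atTop := by
  obtain ⟨γ, ℓ, -, hγ, hℓ, hlim⟩ := h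
  refine ((tendsto_rpow_atTop (sub_pos.2 hγ)).atTop_mul_pos hℓ hlim).congr' ?_
  filter_upwards [eventually_gt_atTop 0] with r hr
  rw [logDeriv_apply, mul_div_assoc, ← mul_assoc, ← rpow_add hr, sub_add_cancel, rpow_one]

theorem CondB.tendsto_mul_logDeriv (h : CondB ψ) :
    Tendsto (fun r => r * logDeriv ψ r) atTop atTop :=
  tendsto_id.atTop_mul_atTop₀ h.1

end Superpolynomial

/-- The quantity `n ψ' ∫₀ʳ ψ^{n-1} - ψⁿ`, which vanishes identically in Euclidean space. Its
nonnegativity on a model manifold is the volume comparison behind the Pohozaev argument. -/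
noncomputable def volumeDefect (n : ℕ) (ψ : ℝ → ℝ) (r : ℝ) : ℝ :=
  n * deriv ψ r * (∫ s in (0:ℝ)..r, ψ s ^ (n - 1)) - ψ r ^ n

namespace IsCHModel

variable {ψ : ℝ → ℝ}

theorem continuous (h : IsCHModel ψ) : Continuous ψ :=
  h.1.continuous

theorem apply_zero (h : IsCHModel ψ) : ψ 0 = 0 :=
  h.2.1

theorem deriv_zero (h : IsCHModel ψ) : deriv ψ 0 = 1 :=
  h.2.2.1

theorem deriv_deriv_nonneg (h : IsCHModel ψ) {r : ℝ} (hr : 0 ≤ r) : 0 ≤ deriv (deriv ψ) r :=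
  h.2.2.2.1 r hr

theorem pos (h : IsCHModel ψ) {r : ℝ} (hr : 0 < r) : 0 < ψ r :=
  h.2.2.2.2 r hr

theorem differentiable (h : IsCHModel ψ) : Differentiable ℝ ψ :=
  h.1.differentiable (by simp)

theorem differentiable_deriv (h : IsCHModel ψ) : Differentiable ℝ (deriv ψ) :=
  (contDiff_infty.1 h.1 2 : ContDiff ℝ 2 ψ).differentiable_deriv_two

theorem convexOn (h : IsCHModel ψ) : ConvexOn ℝ (Set.Ici 0) ψ :=
  convexOn_of_deriv2_nonneg' (convex_Ici 0) h.differentiable.differentiableOn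
    h.differentiable_deriv.differentiableOn fun _ => h.deriv_deriv_nonneg

theorem self_le (h : IsCHModel ψ) {r : ℝ} (hr : 0 < r) : r ≤ ψ r := by
  have hslope := h.convexOn.deriv_le_slope Set.self_mem_Ici hr.le hr (h.differentiable 0)
  rwa [slope_def_field, h.apply_zero, h.deriv_zero, sub_zero, sub_zero, one_le_div hr] at hslope

theorem le_mul_deriv (h : IsCHModel ψ) {r : ℝ} (hr : 0 < r) : ψ r ≤ r * deriv ψ r := by
  have hslope := h.convexOn.slope_le_deriv Set.self_mem_Ici hr.le hr (h.differentiable r)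
  rwa [slope_def_field, h.apply_zero, sub_zero, sub_zero, div_le_iff₀' hr] at hslope

theorem deriv_pos (h : IsCHModel ψ) {r : ℝ} (hr : 0 < r) : 0 < deriv ψ r :=
  pos_of_mul_pos_right ((h.pos hr).trans_le (h.le_mul_deriv hr)) hr.le

theorem tendsto_atTop (h : IsCHModel ψ) : Tendsto ψ atTop atTop :=
  tendsto_atTop_mono' _ ((eventually_gt_atTop 0).mono fun _ hr => h.self_le hr) tendsto_id

theorem tendsto_rpow_zero (h : IsCHModel ψ) {e : ℝ} (he : e < 0) :
    Tendsto (fun r => ψ r ^ e) atTop (𝓝 0) := by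
  simpa only [neg_neg, Function.comp_def] using
    (tendsto_rpow_neg_atTop (neg_pos.2 he)).comp h.tendsto_atTop

theorem isSuperpolynomial (h : IsCHModel ψ) (hcond : CondA ψ ∨ CondB ψ) : IsSuperpolynomial ψ :=
  isSuperpolynomial_of_tendsto_mul_logDeriv (.of_forall h.differentiable)
    ((eventually_gt_atTop 0).mono fun _ => h.pos)
    (hcond.elim CondA.tendsto_mul_logDeriv CondB.tendsto_mul_logDeriv)

section Volume

theorem hasDerivAt_integral_pow (h : IsCHModel ψ) (m : ℕ) (r : ℝ) :
    HasDerivAt (fun t => ∫ s in (0:ℝ)..t, ψ s ^ m) (ψ r ^ m) r :=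
  ((h.continuous.pow m).integral_hasStrictDerivAt 0 r).hasDerivAt

theorem integral_pow_pos (h : IsCHModel ψ) (m : ℕ) {r : ℝ} (hr : 0 < r) :
    0 < ∫ s in (0:ℝ)..r, ψ s ^ m :=
  intervalIntegral.intervalIntegral_pos_of_pos_on ((h.continuous.pow m).intervalIntegrable _ _)
    (fun _ hx => pow_pos (h.pos hx.1) m) hr

theorem hasDerivAt_volumeDefect (h : IsCHModel ψ) (n : ℕ) (r : ℝ) :
    HasDerivAt (volumeDefect n ψ)
      (n * deriv (deriv ψ) r * ∫ s in (0:ℝ)..r, ψ s ^ (n - 1)) r := by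
  refine ((((h.differentiable_deriv r).hasDerivAt.const_mul (n : ℝ)).mul
    (h.hasDerivAt_integral_pow (n - 1) r)).sub
      ((h.differentiable r).hasDerivAt.pow n)).congr_deriv ?_
  ring

theorem volumeDefect_nonneg (h : IsCHModel ψ) {n : ℕ} (hn : n ≠ 0) {r : ℝ} (hr : 0 ≤ r) :
    0 ≤ volumeDefect n ψ r := by
  have hmono : MonotoneOn (volumeDefect n ψ) (Set.Ici 0) := by
    refine monotoneOn_of_hasDerivWithinAt_nonneg (convex_Ici 0)
      (fun x _ => (h.hasDerivAt_volumeDefect n x).continuousAt.continuousWithinAt)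
      (fun x _ => (h.hasDerivAt_volumeDefect n x).hasDerivWithinAt) fun x hx => ?_
    rw [interior_Ici] at hx
    have hψ'' := h.deriv_deriv_nonneg hx.le
    have hV := h.integral_pow_pos (n - 1) hx
    positivity
  have hzero : volumeDefect n ψ 0 = 0 := by
    rw [volumeDefect, intervalIntegral.integral_same, h.apply_zero, zero_pow hn, mul_zero, sub_zero]
  exact hzero.symm.le.trans (hmono Set.self_mem_Ici hr hr)

theorem eq_self_of_volumeDefect_eq_zero (h : IsCHModel ψ) {n : ℕ} (hn : n ≠ 0)
    (hdef : ∀ r, 0 < r → volumeDefect n ψ r = 0) {r : ℝ} (hr : 0 < r) : ψ r = r := by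
  have hflat : ∀ x, 0 < x → deriv (deriv ψ) x = 0 := by
    intro x hx
    have hconst : volumeDefect n ψ =ᶠ[𝓝 x] fun _ => 0 := by
      filter_upwards [lt_mem_nhds hx] with t ht using hdef t ht
    have hder := (h.hasDerivAt_volumeDefect n x).unique
      ((hasDerivAt_const x (0:ℝ)).congr_of_eventuallyEq hconst)
    simpa only [mul_eq_zero, Nat.cast_eq_zero, hn, (h.integral_pow_pos (n - 1) hx).ne', false_or,
      or_false] using hder
  have hconcave : ConcaveOn ℝ (Set.Ici 0) ψ :=
    concaveOn_of_deriv2_nonpos (convex_Ici 0) h.continuous.continuousOn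
      h.differentiable.differentiableOn h.differentiable_deriv.differentiableOn
      fun x hx => (hflat x (by rwa [interior_Ici] at hx)).le
  have hslope := hconcave.slope_le_deriv Set.self_mem_Ici hr.le hr (h.differentiable 0)
  rw [slope_def_field, h.apply_zero, h.deriv_zero, sub_zero, sub_zero, div_le_one hr] at hslope
  exact hslope.antisymm (h.self_le hr)

end Volume

section Growth

theorem hasDerivAt_rpow (h : IsCHModel ψ) (b : ℝ) {r : ℝ} (hr : 0 < r) :
    HasDerivAt (fun s => ψ s ^ b) (deriv ψ r * b * ψ r ^ (b - 1)) r :=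
  (h.differentiable r).hasDerivAt.rpow_const (Or.inl (h.pos hr).ne')

theorem rpow_isBigO_deriv_rpow (h : IsCHModel ψ) (hgrow : IsSuperpolynomial ψ) {b e : ℝ}
    (hb : b ≠ 0) (heb : e < b) :
    (fun r => ψ r ^ e) =O[atTop] fun r => deriv ψ r * b * ψ r ^ (b - 1) := by
  have hpos : ∀ᶠ r in atTop, 0 < ψ r := (eventually_gt_atTop 0).mono fun _ => h.pos
  have hself : ψ =O[atTop] fun r => r * deriv ψ r :=
    .of_bound' ((eventually_gt_atTop 0).mono fun r hr => by
      rw [norm_of_nonneg (h.pos hr).le]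
      exact (h.le_mul_deriv hr).trans (le_norm_self _))
  have hrpow : (fun r => r) =O[atTop] fun r => ψ r ^ (b - e) :=
    hgrow.isBigO_rpow (hpos.mono fun _ => le_of_lt) (sub_pos.2 heb)
  calc (fun r => ψ r ^ e)
      =ᶠ[atTop] fun r => ψ r ^ (e - 1) * ψ r := by
        filter_upwards [hpos] with r hr
        rw [← rpow_add_one hr.ne', sub_add_cancel]
    _ =O[atTop] fun r => ψ r ^ (e - 1) * (r * deriv ψ r) := (isBigO_refl _ _).mul hself
    _ =O[atTop] fun r => ψ r ^ (e - 1) * (ψ r ^ (b - e) * deriv ψ r) :=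
        (isBigO_refl _ _).mul (hrpow.mul (isBigO_refl _ _))
    _ =ᶠ[atTop] fun r => b⁻¹ * (deriv ψ r * b * ψ r ^ (b - 1)) := by
        filter_upwards [hpos] with r hr
        rw [← mul_assoc, ← rpow_add hr]
        field_simp
        ring_nf
    _ =O[atTop] fun r => deriv ψ r * b * ψ r ^ (b - 1) := isBigO_const_mul_self _ _ _

variable {f f' : ℝ → ℝ}

theorem isBigO_rpow_of_deriv (h : IsCHModel ψ) (hgrow : IsSuperpolynomial ψ) {b e : ℝ}
    (hb : 0 < b) (heb : e < b) (hf : ∀ᶠ r in atTop, HasDerivAt f (f' r) r)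
    (hf' : f' =O[atTop] fun r => ψ r ^ e) : f =O[atTop] fun r => ψ r ^ b := by
  refine isBigO_of_deriv_isBigO_of_tendsto_atTop hf
    ((eventually_gt_atTop 0).mono fun r => h.hasDerivAt_rpow b) ?_
    (hf'.trans (h.rpow_isBigO_deriv_rpow hgrow hb.ne' heb))
    ((tendsto_rpow_atTop hb).comp h.tendsto_atTop)
  filter_upwards [eventually_gt_atTop 0] with r hr
  have := h.pos hr
  have := h.deriv_pos hr
  positivity

theorem isBigO_rpow_of_deriv_of_tendsto_zero (h : IsCHModel ψ) (hgrow : IsSuperpolynomial ψ)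
    {b e : ℝ} (hb : b < 0) (heb : e < b) (hf : ∀ᶠ r in atTop, HasDerivAt f (f' r) r)
    (hf' : f' =O[atTop] fun r => ψ r ^ e) (hf0 : Tendsto f atTop (𝓝 0)) :
    f =O[atTop] fun r => ψ r ^ b := by
  refine (isBigO_of_deriv_isBigO_of_tendsto_zero hf
    ((eventually_gt_atTop 0).mono fun r hr => (h.hasDerivAt_rpow b hr).neg) ?_
    (hf'.trans (h.rpow_isBigO_deriv_rpow hgrow hb.ne heb)).neg_right hf0
    (by rw [← neg_zero]; exact (h.tendsto_rpow_zero hb).neg)).of_neg_right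
  filter_upwards [eventually_gt_atTop 0] with r hr
  rw [← neg_mul, ← mul_neg]
  have := h.pos hr
  have := h.deriv_pos hr
  have := neg_pos.2 hb
  positivity

end Growth

end IsCHModel

section PohozaevCoefficient

theorem sub_one_lt_of_critical_le {d p q : ℝ} (hp : 0 < p) (hpd : p < d)
    (hq : d * p / (d - p) - 1 ≤ q) : p - 1 < q := by
  have hlt : p < d * p / (d - p) := by
    rw [lt_div_iff₀ (sub_pos.2 hpd), mul_comm]
    gcongr
    linarith
  linarith

variable {n : ℕ} {p q r : ℝ} {ψ : ℝ → ℝ}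

theorem Kfun_le_neg_mul_volumeDefect (hp : 0 < p) (hpn : p < n)
    (hq : (n : ℝ) * p / ((n : ℝ) - p) - 1 ≤ q) (hψ : 0 < ψ r) :
    Kfun n p q ψ r ≤ -(((n : ℝ) - 1) / (n * ψ r)) * volumeDefect n ψ r := by
  have hnp : 0 < (n : ℝ) - p := sub_pos.2 hpn
  have hn : 0 < (n : ℝ) := by linarith
  -- Equality at the critical exponent, where `q + 1 = n p / (n - p)`.
  have hcrit : 1 / (q + 1) ≤ (n - p) / (n * p) := by
    rw [← one_div_div ((n : ℝ) * p)]
    exact one_div_le_one_div_of_le (by positivity) (by linarith)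
  have hcoef : (p - 1) / p + 1 / (q + 1) ≤ ((n : ℝ) - 1) / n := by
    calc (p - 1) / p + 1 / (q + 1) ≤ (p - 1) / p + (n - p) / (n * p) := by gcongr
      _ = ((n : ℝ) - 1) / n := by field_simp; ring
  obtain ⟨m, rfl⟩ := Nat.exists_eq_succ_of_ne_zero (Nat.cast_pos.1 hn).ne'
  simp only [Kfun, volumeDefect, Nat.succ_eq_add_one, Nat.add_sub_cancel] at hcoef ⊢
  calc ((p - 1) / p + 1 / (q + 1)) * ψ r ^ m -
        (((m + 1 : ℕ) : ℝ) - 1) * (deriv ψ r / ψ r) * ∫ s in (0:ℝ)..r, ψ s ^ m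
      ≤ (((m + 1 : ℕ) : ℝ) - 1) / (m + 1 : ℕ) * ψ r ^ m -
        (((m + 1 : ℕ) : ℝ) - 1) * (deriv ψ r / ψ r) * ∫ s in (0:ℝ)..r, ψ s ^ m := by gcongr
    _ = _ := by
      field_simp
      ring

theorem IsCHModel.Kfun_nonpos (h : IsCHModel ψ) (hp : 1 < p) (hpn : p < n)
    (hq : (n : ℝ) * p / ((n : ℝ) - p) - 1 ≤ q) (hr : 0 < r) : Kfun n p q ψ r ≤ 0 := by
  have hψ := h.pos hr
  have hn : 0 < (n : ℝ) - 1 := sub_pos.2 (hp.trans hpn)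
  have hn0 : n ≠ 0 := (Nat.cast_pos.1 ((zero_lt_one.trans hp).trans hpn)).ne'
  have hdefect := h.volumeDefect_nonneg hn0 hr.le
  refine (Kfun_le_neg_mul_volumeDefect (zero_lt_one.trans hp) hpn hq hψ).trans ?_
  rw [neg_mul, Left.neg_nonpos_iff]
  positivity

theorem IsCHModel.volumeDefect_eq_zero_of_Kfun_eq_zero (h : IsCHModel ψ) (hp : 1 < p)
    (hpn : p < n) (hq : (n : ℝ) * p / ((n : ℝ) - p) - 1 ≤ q) (hr : 0 < r)
    (hK : Kfun n p q ψ r = 0) : volumeDefect n ψ r = 0 := by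
  have hn : 0 < (n : ℝ) - 1 := sub_pos.2 (hp.trans hpn)
  have hn0 : 0 < n := Nat.cast_pos.1 ((zero_lt_one.trans hp).trans hpn)
  have hψ := h.pos hr
  have hcoef : 0 < ((n : ℝ) - 1) / (n * ψ r) := by positivity
  have hle := Kfun_le_neg_mul_volumeDefect (zero_lt_one.trans hp) hpn hq hψ
  rw [hK, neg_mul, Left.nonneg_neg_iff] at hle
  exact (nonpos_of_mul_nonpos_right hle hcoef).antisymm
    (h.volumeDefect_nonneg hn0.ne' hr.le)

end PohozaevCoefficient

/-- The radial flux `ψ^{n-1} |u'|^{p-2} u'` of the `p`-Laplacian, whose derivative the equation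
prescribes. -/
noncomputable def radialFlux (n : ℕ) (p : ℝ) (ψ u : ℝ → ℝ) (r : ℝ) : ℝ :=
  ψ r ^ (n - 1) * oddPow p (deriv u r)

theorem pohozaevP_eq (n : ℕ) (p q : ℝ) (ψ u : ℝ → ℝ) :
    pohozaevP n p q ψ u = fun r => (∫ s in (0:ℝ)..r, ψ s ^ (n - 1)) * energyF p q u r +
      radialFlux n p ψ u r * u r / (q + 1) := by
  ext r
  rw [pohozaevP, radialFlux, oddPow]
  ring

namespace IsRadialSolution

variable {n : ℕ} {p q α r : ℝ} {ψ u : ℝ → ℝ} {T : ℝ≥0∞}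

section Pohozaev

theorem hasDerivAt_radialFlux (hu : IsRadialSolution n p q ψ T α u) (hr : 0 < r)
    (hrT : ENNReal.ofReal r < T) :
    HasDerivAt (radialFlux n p ψ u) (-(ψ r ^ (n - 1) * u r ^ q)) r := by
  simpa only [mul_assoc] using! hu.eqn r hr hrT

theorem radialFlux_zero (hu : IsRadialSolution n p q ψ T α u) : radialFlux n p ψ u 0 = 0 := by
  rw [radialFlux, hu.deriv_init, oddPow_zero_right, mul_zero]

theorem continuousOn_radialFlux (hu : IsRadialSolution n p q ψ T α u) (hψ : Continuous ψ)
    (hp : 1 < p) : ContinuousOn (radialFlux n p ψ u) {r | 0 ≤ r ∧ ENNReal.ofReal r < T} :=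
  (hψ.pow _).continuousOn.mul ((continuous_oddPow hp).comp_continuousOn hu.deriv_cont)

theorem deriv_ne_zero (hu : IsRadialSolution n p q ψ T α u) (hψ : IsCHModel ψ) (hp : 1 < p)
    (hr : 0 < r) (hrT : ENNReal.ofReal r < T) : deriv u r ≠ 0 := by
  have hT : ∀ s ≤ r, ENNReal.ofReal s < T :=
    fun s hs => (ENNReal.ofReal_le_ofReal hs).trans_lt hrT
  have hanti : StrictAntiOn (radialFlux n p ψ u) (Set.Icc 0 r) := by
    refine strictAntiOn_of_hasDerivWithinAt_neg (convex_Icc 0 r)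
      ((hu.continuousOn_radialFlux hψ.continuous hp).mono fun s hs => ⟨hs.1, hT s hs.2⟩)
      (f' := fun s => -(ψ s ^ (n - 1) * u s ^ q)) (fun s hs => ?_) fun s hs => ?_
    all_goals rw [interior_Icc] at hs
    · exact (hu.hasDerivAt_radialFlux hs.1 (hT s hs.2.le)).hasDerivWithinAt
    · have := hψ.pos hs.1
      have := hu.pos s hs.1.le (hT s hs.2.le)
      exact neg_neg_of_pos (by positivity)
  have hneg : radialFlux n p ψ u r < 0 := hu.radialFlux_zero ▸
    hanti (Set.left_mem_Icc.2 hr.le) (Set.right_mem_Icc.2 hr.le) hr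
  intro hzero
  rw [radialFlux, hzero, oddPow_zero_right, mul_zero] at hneg
  exact hneg.false

theorem hasDerivAt_oddPow_deriv (hu : IsRadialSolution n p q ψ T α u) (hψ : IsCHModel ψ)
    (hr : 0 < r) (hrT : ENNReal.ofReal r < T) :
    HasDerivAt (fun s => oddPow p (deriv u s))
      (-u r ^ q - (n - 1 : ℕ) * (deriv ψ r / ψ r) * oddPow p (deriv u r)) r := by
  have hψr := (hψ.pos hr).ne'
  have heq : (fun s => oddPow p (deriv u s)) =ᶠ[𝓝 r]
      fun s => radialFlux n p ψ u s / ψ s ^ (n - 1) := by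
    filter_upwards [lt_mem_nhds hr] with s hs
    rw [radialFlux, mul_div_cancel_left₀ _ (pow_ne_zero _ (hψ.pos hs).ne')]
  refine (((hu.hasDerivAt_radialFlux hr hrT).div ((hψ.differentiable r).hasDerivAt.pow (n - 1))
    (pow_ne_zero _ hψr)).congr_of_eventuallyEq heq).congr_deriv ?_
  rw [radialFlux]
  rcases n - 1 with _ | m
  · simp
  · rw [Nat.add_sub_cancel, Pi.pow_apply]
    field_simp
    ring

theorem hasDerivAt_energyF (hu : IsRadialSolution n p q ψ T α u) (hψ : IsCHModel ψ)
    (hp : 1 < p) (hq : q + 1 ≠ 0) (hr : 0 < r) (hrT : ENNReal.ofReal r < T) :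
    HasDerivAt (energyF p q u) (-((n - 1 : ℕ) * (deriv ψ r / ψ r) * |deriv u r| ^ p)) r := by
  have hconj := Real.HolderConjugate.conjExponent hp
  have hp0 : p ≠ 0 := (zero_lt_one.trans hp).ne'
  have hp1 : p - 1 ≠ 0 := (sub_pos.2 hp).ne'
  have hkin := hasDerivAt_abs_rpow_of_hasDerivAt_oddPow hconj (hu.hasDerivAt_oddPow_deriv hψ hr hrT)
  have hpot := ((hu.diff r hr.le hrT).hasDerivAt.rpow_const (p := q + 1)
    (Or.inl (hu.pos r hr.le hrT).ne')).div_const (q + 1)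
  refine ((hkin.const_mul ((p - 1) / p)).add hpot).congr_deriv ?_
  rw [← oddPow_mul_self hp, Real.conjExponent, add_sub_cancel_right]
  field_simp
  ring

theorem hasDerivAt_pohozaevP (hu : IsRadialSolution n p q ψ T α u) (hψ : IsCHModel ψ)
    (hn : n ≠ 0) (hp : 1 < p) (hq : q + 1 ≠ 0) (hr : 0 < r) (hrT : ENNReal.ofReal r < T) :
    HasDerivAt (pohozaevP n p q ψ u) (Kfun n p q ψ r * |deriv u r| ^ p) r := by
  have hur := (hu.pos r hr.le hrT).ne'
  have hflux := ((hu.hasDerivAt_radialFlux hr hrT).mul (hu.diff r hr.le hrT).hasDerivAt).div_const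
    (q + 1)
  rw [pohozaevP_eq]
  refine (((hψ.hasDerivAt_integral_pow (n - 1) r).mul
    (hu.hasDerivAt_energyF hψ hp hq hr hrT)).add hflux).congr_deriv ?_
  rw [energyF, Kfun, radialFlux, Nat.cast_pred (Nat.pos_of_ne_zero hn), rpow_add_one hur,
    ← oddPow_mul_self hp]
  field_simp
  ring

theorem continuousOn_pohozaevP (hu : IsRadialSolution n p q ψ T α u) (hψ : IsCHModel ψ)
    (hp : 1 < p) : ContinuousOn (pohozaevP n p q ψ u) {r | 0 ≤ r ∧ ENNReal.ofReal r < T} := by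
  have hcont : ContinuousOn u {r | 0 ≤ r ∧ ENNReal.ofReal r < T} :=
    fun r hr => (hu.diff r hr.1 hr.2).continuousAt.continuousWithinAt
  have hvol : Continuous fun r => ∫ s in (0:ℝ)..r, ψ s ^ (n - 1) :=
    continuous_iff_continuousAt.2 fun r => (hψ.hasDerivAt_integral_pow (n - 1) r).continuousAt
  have hkin := hu.deriv_cont.abs.rpow_const (p := p)
    fun _ _ => Or.inr (zero_lt_one.trans hp).le
  have hpot := hcont.rpow_const (p := q + 1) fun r hr => Or.inl (hu.pos r hr.1 hr.2).ne'
  rw [pohozaevP_eq]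
  exact (hvol.continuousOn.mul ((hkin.const_mul _).add (hpot.div_const _))).add
    (((hu.continuousOn_radialFlux hψ.continuous hp).mul hcont).div_const _)

theorem pohozaevP_zero (hu : IsRadialSolution n p q ψ T α u) : pohozaevP n p q ψ u 0 = 0 := by
  simp only [pohozaevP_eq, intervalIntegral.integral_same, hu.radialFlux_zero, zero_mul, zero_div,
    add_zero]

theorem radialFlux_mul_div_le_pohozaevP (hu : IsRadialSolution n p q ψ T α u)
    (hψ : IsCHModel ψ) (hp : 1 < p) (hq : 0 < q + 1) (hr : 0 < r) (hrT : ENNReal.ofReal r < T) :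
    radialFlux n p ψ u r * u r / (q + 1) ≤ pohozaevP n p q ψ u r := by
  rw [pohozaevP_eq, le_add_iff_nonneg_left, energyF]
  have := sub_pos.2 hp
  have := hψ.integral_pow_pos (n - 1) hr
  have := hu.pos r hr.le hrT
  positivity

theorem pohozaevP_eq_zero (hu : IsRadialSolution n p q ψ ⊤ α u) (hψ : IsCHModel ψ)
    (hn : n ≠ 0) (hp : 1 < p) (hq : 0 < q + 1) (hK : ∀ r, 0 < r → Kfun n p q ψ r ≤ 0)
    (hlim : Tendsto (fun r => radialFlux n p ψ u r * u r) atTop (𝓝 0)) (hr : 0 ≤ r) :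
    pohozaevP n p q ψ u r = 0 := by
  have hanti : AntitoneOn (pohozaevP n p q ψ u) (Set.Ici 0) := by
    refine antitoneOn_of_hasDerivWithinAt_nonpos (convex_Ici 0)
      ((hu.continuousOn_pohozaevP hψ hp).mono fun s hs => ⟨hs, ENNReal.ofReal_lt_top⟩)
      (f' := fun s => Kfun n p q ψ s * |deriv u s| ^ p) (fun s hs => ?_) fun s hs => ?_
    all_goals rw [interior_Ici] at hs
    · exact (hu.hasDerivAt_pohozaevP hψ hn hp hq.ne' hs ENNReal.ofReal_lt_top).hasDerivWithinAt
    · exact mul_nonpos_of_nonpos_of_nonneg (hK s hs) (rpow_nonneg (abs_nonneg _) p)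
  have hlim' : Tendsto (fun s => radialFlux n p ψ u s * u s / (q + 1)) atTop (𝓝 0) := by
    simpa only [zero_div] using hlim.div_const (q + 1)
  refine le_antisymm ((hanti Set.self_mem_Ici hr hr).trans_eq hu.pohozaevP_zero)
    (le_of_tendsto hlim' ?_)
  filter_upwards [eventually_ge_atTop r, eventually_gt_atTop 0] with s hrs hs
  exact (hu.radialFlux_mul_div_le_pohozaevP hψ hp hq hs ENNReal.ofReal_lt_top).trans
    (hanti hr hs.le hrs)

theorem Kfun_eq_zero (hu : IsRadialSolution n p q ψ ⊤ α u) (hψ : IsCHModel ψ)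
    (hn : n ≠ 0) (hp : 1 < p) (hq : 0 < q + 1) (hK : ∀ r, 0 < r → Kfun n p q ψ r ≤ 0)
    (hlim : Tendsto (fun r => radialFlux n p ψ u r * u r) atTop (𝓝 0)) (hr : 0 < r) :
    Kfun n p q ψ r = 0 := by
  have hconst : pohozaevP n p q ψ u =ᶠ[𝓝 r] fun _ => 0 := by
    filter_upwards [lt_mem_nhds hr] with s hs using hu.pohozaevP_eq_zero hψ hn hp hq hK hlim hs.le
  have hder := (hu.hasDerivAt_pohozaevP hψ hn hp hq.ne' hr ENNReal.ofReal_lt_top).unique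
    ((hasDerivAt_const r (0:ℝ)).congr_of_eventuallyEq hconst)
  have hu' := hu.deriv_ne_zero hψ hp hr ENNReal.ofReal_lt_top
  exact (mul_eq_zero.1 hder).resolve_right (rpow_pos_of_pos (abs_pos.2 hu') p).ne'

end Pohozaev

section Decay

variable {β : ℝ}

theorem isBigO_radialFlux (hu : IsRadialSolution n p q ψ ⊤ α u) (hψ : IsCHModel ψ)
    (hgrow : IsSuperpolynomial ψ) (hq : 0 ≤ q) (hdecay : u =O[atTop] fun r => ψ r ^ (-β)) {b : ℝ}
    (hb : 0 < b) (hβb : (n - 1 : ℕ) - β * q < b) :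
    radialFlux n p ψ u =O[atTop] fun r => ψ r ^ b := by
  refine hψ.isBigO_rpow_of_deriv hgrow hb hβb ((eventually_gt_atTop 0).mono fun r hr =>
    hu.hasDerivAt_radialFlux hr ENNReal.ofReal_lt_top) ?_
  have hsource : (fun r => u r ^ q) =O[atTop] fun r => (ψ r ^ (-β)) ^ q :=
    hdecay.rpow hq ((eventually_gt_atTop 0).mono fun r hr => rpow_nonneg (hψ.pos hr).le _)
  refine ((isBigO_refl (fun r => ψ r ^ (n - 1)) atTop).mul hsource).neg_left.congr' .rfl ?_
  filter_upwards [eventually_gt_atTop 0] with r hr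
  have hψr := hψ.pos hr
  rw [← rpow_natCast, ← rpow_mul hψr.le, ← rpow_add hψr]
  ring_nf

theorem isBigO_deriv_of_isBigO_radialFlux (hψ : IsCHModel ψ) (hp : 1 < p) {b : ℝ}
    (hflux : radialFlux n p ψ u =O[atTop] fun r => ψ r ^ b) :
    deriv u =O[atTop] fun r => ψ r ^ ((b - (n - 1 : ℕ)) * (p - 1)⁻¹) := by
  have hp' : 0 < p - 1 := sub_pos.2 hp
  have hpos : ∀ᶠ r in atTop, 0 < ψ r := (eventually_gt_atTop 0).mono fun _ => hψ.pos
  have hodd : (fun r => |deriv u r| ^ (p - 1)) =O[atTop] fun r => ψ r ^ (b - (n - 1 : ℕ)) := by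
    refine (hflux.mul (isBigO_refl (fun r => (ψ r ^ (n - 1))⁻¹) atTop)).norm_left.congr' ?_ ?_
    all_goals filter_upwards [hpos] with r hr
    · rw [radialFlux, mul_right_comm, mul_inv_cancel₀ (pow_ne_zero _ hr.ne'), one_mul, norm_eq_abs,
        abs_oddPow hp]
    · rw [rpow_sub hr, rpow_natCast, div_eq_mul_inv]
  refine ((hodd.rpow (inv_nonneg.2 hp'.le) (hpos.mono fun r hr => rpow_nonneg hr.le _)).congr'
    (.of_forall fun r => ?_) (hpos.mono fun r hr => ?_)).of_norm_left
  · exact rpow_rpow_inv (abs_nonneg _) hp'.ne'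
  · exact (rpow_mul hr.le _ _).symm

theorem isBigO_rpow_neg_of_isBigO_rpow_neg (hu : IsRadialSolution n p q ψ ⊤ α u) (hψ : IsCHModel ψ)
    (hgrow : IsSuperpolynomial ψ) (hp : 1 < p) (hq : 0 ≤ q) (hβ : 0 < β)
    (hdecay : u =O[atTop] fun r => ψ r ^ (-β)) {γ : ℝ} (hγ : 0 < γ)
    (hγβ : γ * (p - 1) < β * q) (hγn : γ * (p - 1) < (n - 1 : ℕ)) :
    u =O[atTop] fun r => ψ r ^ (-γ) := by
  obtain ⟨b, hb, hb'⟩ : ∃ b, max 0 ((n - 1 : ℕ) - β * q) < b ∧ b < (n - 1 : ℕ) - γ * (p - 1) :=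
    exists_between (max_lt (sub_pos.2 hγn) (by gcongr))
  obtain ⟨hb0, hbβ⟩ := max_lt_iff.1 hb
  have hexp : (b - (n - 1 : ℕ)) * (p - 1)⁻¹ < -γ := by
    rw [← div_eq_mul_inv, div_lt_iff₀ (sub_pos.2 hp)]
    linarith
  exact hψ.isBigO_rpow_of_deriv_of_tendsto_zero hgrow (neg_neg_of_pos hγ) hexp
    ((eventually_ge_atTop 0).mono fun r hr => (hu.diff r hr ENNReal.ofReal_lt_top).hasDerivAt)
    (isBigO_deriv_of_isBigO_radialFlux hψ hp (hu.isBigO_radialFlux hψ hgrow hq hdecay hb0 hbβ))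
    (hdecay.trans_tendsto (hψ.tendsto_rpow_zero (neg_neg_of_pos hβ)))

theorem exists_lt_isBigO_rpow_neg (hu : IsRadialSolution n p q ψ ⊤ α u) (hψ : IsCHModel ψ)
    (hgrow : IsSuperpolynomial ψ) (hp : 1 < p) (hpq : p - 1 < q) (hβ : 0 < β)
    (hdecay : u =O[atTop] fun r => ψ r ^ (-β)) :
    ∃ γ, ((n - 1 : ℕ) : ℝ) < γ * (q + 1) ∧ u =O[atTop] fun r => ψ r ^ (-γ) := by
  by_contra! hsmall
  have hp' : 0 < p - 1 := sub_pos.2 hp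
  have hq : 0 < q := hp'.trans hpq
  set S : Set ℝ := {γ | u =O[atTop] fun r => ψ r ^ (-γ)}
  have hS : ∀ γ ∈ S, γ * (q + 1) ≤ (n - 1 : ℕ) := fun γ hγ => not_lt.1 fun h => hsmall γ h hγ
  have hbdd : BddAbove S := ⟨(n - 1 : ℕ) / (q + 1), fun γ hγ => by
    rw [le_div_iff₀ (by positivity)]
    exact hS γ hγ⟩
  have hsup : 0 < sSup S := hβ.trans_le (le_csSup hbdd hdecay)
  obtain ⟨κ, hκ, hκq⟩ : ∃ κ, 1 < κ ∧ κ < q / (p - 1) := exists_between ((one_lt_div hp').2 hpq)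
  have hκ0 : 0 < κ := zero_lt_one.trans hκ
  obtain ⟨γ, hγS, hγ⟩ := exists_lt_of_lt_csSup ⟨β, hdecay⟩ (div_lt_self hsup hκ)
  have hγ0 : 0 < γ := (div_pos hsup hκ0).trans hγ
  have hγq : γ * κ * (p - 1) < γ * q := by
    rw [mul_assoc]
    gcongr
    exact (lt_div_iff₀ hp').1 hκq
  have hγn : γ * κ * (p - 1) < (n - 1 : ℕ) := by linarith [hS γ hγS]
  have himproved : γ * κ ∈ S :=
    hu.isBigO_rpow_neg_of_isBigO_rpow_neg hψ hgrow hp hq.le hγ0 hγS (mul_pos hγ0 hκ0) hγq hγn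
  exact ((div_lt_iff₀ hκ0).1 hγ).not_ge (le_csSup hbdd himproved)

theorem tendsto_radialFlux_mul (hu : IsRadialSolution n p q ψ ⊤ α u) (hψ : IsCHModel ψ)
    (hgrow : IsSuperpolynomial ψ) (hp : 1 < p) (hpq : p - 1 < q) (hβ : 0 < β)
    (hdecay : u =O[atTop] fun r => ψ r ^ (-β)) :
    Tendsto (fun r => radialFlux n p ψ u r * u r) atTop (𝓝 0) := by
  have hq : 0 < q := (sub_pos.2 hp).trans hpq
  obtain ⟨γ, hγn, hγ⟩ := hu.exists_lt_isBigO_rpow_neg hψ hgrow hp hpq hβ hdecay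
  have hγ0 : 0 < γ := pos_of_mul_pos_left ((Nat.cast_nonneg _).trans_lt hγn) (by positivity)
  obtain ⟨b, hb, hbγ⟩ : ∃ b, max 0 ((n - 1 : ℕ) - γ * q) < b ∧ b < γ :=
    exists_between (max_lt hγ0 (by linarith))
  obtain ⟨hb0, hbn⟩ := max_lt_iff.1 hb
  refine ((hu.isBigO_radialFlux hψ hgrow hq.le hγ hb0 hbn).mul hγ).trans_tendsto
    ((hψ.tendsto_rpow_zero (sub_neg.2 hbγ)).congr' ?_)
  filter_upwards [eventually_gt_atTop 0] with r hr
  rw [sub_eq_add_neg, rpow_add (hψ.pos hr)]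

end Decay

end IsRadialSolution

theorem statement_14_general (n : ℕ) (p q : ℝ) (hp1 : 1 < p) (hpn : p < n)
    (hq : (n : ℝ) * p / ((n : ℝ) - p) - 1 ≤ q)
    (ψ : ℝ → ℝ) (hψ : IsCHModel ψ) (hgrow : IsSuperpolynomial ψ)
    (α : ℝ) (u : ℝ → ℝ) (hu : IsRadialSolution n p q ψ ⊤ α u) :
    ¬ ∃ C β : ℝ, 0 < β ∧ ∀ᶠ r in atTop, u r ≤ C * ψ r ^ (-β) := by
  rintro ⟨C, β, hβ, hbound⟩
  have hn : n ≠ 0 := (Nat.cast_pos.1 ((zero_lt_one.trans hp1).trans hpn)).ne'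
  have hpq : p - 1 < q := sub_one_lt_of_critical_le (zero_lt_one.trans hp1) hpn hq
  have hdecay : u =O[atTop] fun r => ψ r ^ (-β) := by
    refine .of_bound C ?_
    filter_upwards [hbound, eventually_gt_atTop 0] with r hr hr0
    rwa [norm_of_nonneg (hu.pos r hr0.le ENNReal.ofReal_lt_top).le,
      norm_of_nonneg (rpow_nonneg (hψ.pos hr0).le _)]
  have hK : ∀ r, 0 < r → Kfun n p q ψ r = 0 := fun r =>
    hu.Kfun_eq_zero hψ hn hp1 (by linarith) (fun _ => hψ.Kfun_nonpos hp1 hpn hq)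
      (hu.tendsto_radialFlux_mul hψ hgrow hp1 hpq hβ hdecay)
  have heuclidean : ∀ r, 0 < r → ψ r = r := fun r =>
    hψ.eq_self_of_volumeDefect_eq_zero hn fun r hr =>
      hψ.volumeDefect_eq_zero_of_Kfun_eq_zero hp1 hpn hq hr (hK r hr)
  exact hgrow.not_eventuallyEq_id ((eventually_gt_atTop 0).mono heuclidean)

/-- no global radial solution decays like a power of `ψ`. -/
theorem statement_14 (n : ℕ) (hn : 2 ≤ n) (p q : ℝ) (hp1 : 1 < p) (hpn : p < n)
    (hq : (n : ℝ) * p / ((n : ℝ) - p) - 1 ≤ q)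
    (ψ : ℝ → ℝ) (hψ : IsCHModel ψ)
    (hpc : Tendsto (fun r : ℝ => ∫ s in (0:ℝ)..r, Theta n ψ s ^ (1 / (p - 1)))
      atTop atTop)
    (hcond : CondA ψ ∨ CondB ψ)
    (α : ℝ) (hα : 0 < α)
    (u : ℝ → ℝ) (hu : IsRadialSolution n p q ψ ⊤ α u) :
    ¬ ∃ C β : ℝ, 0 < C ∧ 0 < β ∧ ∀ r : ℝ, 0 < r → u r ≤ C * ψ r ^ (-β) := by
  rintro ⟨C, β, -, hβ, hbound⟩
  exact statement_14_general n p q hp1 hpn hq ψ hψ (hψ.isSuperpolynomial hcond) α u hu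
    ⟨C, β, hβ, (eventually_gt_atTop 0).mono hbound⟩
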